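/- Let χ be a Dirichlet character modulo q induced by the primitive Dirichlet character χ* modulo q*. Then for all x ≥ 2, |ψ_K(x, χ*∘N) − ψ_K(x, χ∘N)| ≪ (log qx)², where the implied constant depends only on K. -/

import Mathlib

/-!
Setting: `K` is a number field, Galois over `ℚ`, with ring of integers `𝓞 K`.
We formalize the objects from Smith, "A generalization of the
Barban-Davenport-Halberstam Theorem to number fields".
-/

open NumberField Ideal
open scoped Classical BigOperators

noncomputable section

/-- `𝔞` is a (positive) power of a nonzero prime ideal of `𝓞 K`. -/
def IsPrimeIdealPower {K : Type*} [Field K] [NumberField K] (𝔞 : Ideal (𝓞 K)) : Prop :=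
  ∃ (𝔭 : Ideal (𝓞 K)) (m : ℕ), 𝔭.IsPrime ∧ 𝔭 ≠ ⊥ ∧ 1 ≤ m ∧ 𝔞 = 𝔭 ^ m

/-- The von Mangoldt function on ideals of `𝓞 K`: `Λ_K(𝔭^m) = log N𝔭`, and `0` otherwise.
(For `𝔞 = 𝔭^m` with `𝔭` prime, the radical of `𝔞` is `𝔭`.) -/
def LambdaK (K : Type*) [Field K] [NumberField K] (𝔞 : Ideal (𝓞 K)) : ℝ :=
  if IsPrimeIdealPower 𝔞 then Real.log (absNorm 𝔞.radical) else 0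

/-- `ψ_K(x; q, a) = ∑_{N𝔭^m ≤ x, N𝔭^m ≡ a (mod q)} log N𝔭`. -/
def psiK (K : Type*) [Field K] [NumberField K] (x : ℝ) (q : ℕ) (a : ZMod q) : ℝ :=
  ∑' 𝔞 : Ideal (𝓞 K),
    if (absNorm 𝔞 : ℝ) ≤ x ∧ ((absNorm 𝔞 : ZMod q) = a) then LambdaK K 𝔞 else 0

/-- `G_q`: the image of `Gal(K(ζ_q)/K)` in `(ℤ/qℤ)ˣ` under restriction to `ℚ(ζ_q)` followed
by the canonical isomorphism `Gal(ℚ(ζ_q)/ℚ) ≅ (ℤ/qℤ)ˣ`; concretely, the range of the map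
sending `σ ∈ Gal(K(ζ_q)/K)` to the exponent `a ∈ (ℤ/qℤ)ˣ` with `σ(ζ_q) = ζ_q^a`. -/
def Gq (K : Type*) [Field K] [NumberField K] (q : ℕ) : Subgroup (ZMod q)ˣ :=
  if h : 0 < q then
    haveI : NeZero q := ⟨h.ne'⟩
    haveI : NeZero (((⟨q, h⟩ : ℕ+) : ℕ) : K) := ⟨Nat.cast_ne_zero.mpr h.ne'⟩
    ((IsCyclotomicExtension.zeta_spec q K
        (CyclotomicField q K)).autToPow K).range
  else ⊥

/-- `φ_K(q) = |G_q|`. -/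
def phiK (K : Type*) [Field K] [NumberField K] (q : ℕ) : ℕ :=
  Nat.card (Gq K q)

/-- `ψ_K(x, χ∘N) = ∑_{N𝔞 ≤ x} χ(N𝔞) Λ_K(𝔞)`. -/
def psiKChi (K : Type*) [Field K] [NumberField K] (x : ℝ) {q : ℕ}
    (χ : DirichletCharacter ℂ q) : ℂ :=
  ∑' 𝔞 : Ideal (𝓞 K),
    if (absNorm 𝔞 : ℝ) ≤ x then χ (absNorm 𝔞 : ZMod q) * (LambdaK K 𝔞 : ℂ) else 0

/-- `ψ'_K(x, χ∘N)`: equals `ψ_K(x, χ∘N) − x` when `χ` is trivial on `G_q`,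
and `ψ_K(x, χ∘N)` otherwise. -/
def psiKChi' (K : Type*) [Field K] [NumberField K] (x : ℝ) {q : ℕ}
    (χ : DirichletCharacter ℂ q) : ℂ :=
  if ∀ a ∈ Gq K q, χ (a : ZMod q) = 1 then psiKChi K x χ - x else psiKChi K x χ

/-- The common residue degree `f(K/ℚ; p)` of the primes of `K` above `p`
(well-defined when `K/ℚ` is Galois): any prime `𝔭` above `p` has `N𝔭 = p^f`. -/
def resDeg (K : Type*) [Field K] [NumberField K] (p : ℕ) : ℕ :=
  if h : ∃ 𝔭 : Ideal (𝓞 K), 𝔭.IsPrime ∧ 𝔭 ≠ ⊥ ∧ (p : 𝓞 K) ∈ 𝔭 then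
    (absNorm h.choose).factorization p
  else 0

/-- `D_K(n)`: the number of prime ideal powers `𝔭^m` of `𝓞 K` with `N𝔭^m = n`. -/
def DK (K : Type*) [Field K] [NumberField K] (n : ℕ) : ℕ :=
  Nat.card {𝔞 : Ideal (𝓞 K) // IsPrimeIdealPower 𝔞 ∧ absNorm 𝔞 = n}

/-- `Λ_K^*(n) = f(K/ℚ; p) · log p` if `n = p^k` is a prime power, and `0` otherwise. -/
def LambdaStarK (K : Type*) [Field K] [NumberField K] (n : ℕ) : ℝ :=
  if IsPrimePow n then (resDeg K n.minFac : ℝ) * Real.log n.minFac else 0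

end

/-!
The values at `n` of `χ*` and of the induced `χ` agree when `n` is coprime to `q`, and otherwise
the latter is `0`. Hence `ψ_K(x, χ*∘N) − ψ_K(x, χ∘N)` is the sum of `χ*(N𝔞) Λ_K(𝔞)` over the prime
ideal powers `𝔞 = 𝔭 ^ m` with `N𝔞 ≤ x` and `𝔭 ∣ q`. Each such `𝔭` contributes at most
`⌊log x / log N𝔭⌋ * log N𝔭 ≤ log x`, and the number of these `𝔭` is at most
`[K : ℚ] * log q / log 2`, since their product divides `(q)`, of norm `q ^ [K : ℚ]`, and each has
norm at least `2`.
-/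

lemma log_mul_log_le_log_mul_sq {a b : ℝ} (ha : 1 ≤ a) (hb : 1 ≤ b) :
    Real.log a * Real.log b ≤ Real.log (a * b) ^ 2 := by
  have ha_log : 0 ≤ Real.log a := Real.log_nonneg ha
  have hb_log : 0 ≤ Real.log b := Real.log_nonneg hb
  rw [Real.log_mul (by positivity) (by positivity)]
  nlinarith

lemma changeLevel_natCast {R : Type*} [CommMonoidWithZero R] {q r : ℕ} (hdvd : r ∣ q)
    (χ : DirichletCharacter R r) (n : ℕ) :
    DirichletCharacter.changeLevel hdvd χ (n : ZMod q) =
      if n.Coprime q then χ (n : ZMod r) else 0 := by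
  split_ifs with h
  · exact_mod_cast χ.changeLevel_eq_cast_of_dvd' hdvd (Nat.isCoprime_iff_coprime.mpr h)
  · exact MulChar.map_nonunit _ ((ZMod.isUnit_iff_coprime n q).not.mpr h)

section AbsNorm

open UniqueFactorizationMonoid (primeFactors)

variable {S : Type*} [CommRing S] [IsDedekindDomain S]

lemma mem_primeFactors_iff_isPrime_and_le {𝔭 𝔫 : Ideal S} (h𝔫 : 𝔫 ≠ ⊥) :
    𝔭 ∈ primeFactors 𝔫 ↔ 𝔭.IsPrime ∧ 𝔫 ≤ 𝔭 := by
  rw [UniqueFactorizationMonoid.mem_primeFactors, mem_normalizedFactors_iff h𝔫]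

variable [Module.Free ℤ S] [Module.Finite ℤ S]

lemma two_le_absNorm {𝔞 : Ideal S} (h_bot : 𝔞 ≠ ⊥) (h_top : 𝔞 ≠ ⊤) : 2 ≤ absNorm 𝔞 := by
  have h_zero : absNorm 𝔞 ≠ 0 := absNorm_eq_zero_iff.not.mpr h_bot
  have h_one : absNorm 𝔞 ≠ 1 := absNorm_eq_one_iff.not.mpr h_top
  omega

lemma two_pow_card_primeFactors_le_absNorm {𝔫 : Ideal S} (h𝔫 : 𝔫 ≠ ⊥) :
    2 ^ (primeFactors 𝔫).card ≤ absNorm 𝔫 := by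
  have h_pos : 0 < absNorm 𝔫 := Nat.pos_of_ne_zero (absNorm_eq_zero_iff.not.mpr h𝔫)
  have h_dvd : ∏ 𝔭 ∈ primeFactors 𝔫, 𝔭 ∣ 𝔫 := UniqueFactorizationMonoid.radical_dvd_self
  calc 2 ^ (primeFactors 𝔫).card ≤ ∏ 𝔭 ∈ primeFactors 𝔫, absNorm 𝔭 := by
        refine Finset.pow_card_le_prod _ _ _ fun 𝔭 h𝔭 => ?_
        obtain ⟨h_prime, h_le⟩ := (mem_primeFactors_iff_isPrime_and_le h𝔫).mp h𝔭
        exact two_le_absNorm (ne_bot_of_le_ne_bot h𝔫 h_le) h_prime.ne_top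
    _ = absNorm (∏ 𝔭 ∈ primeFactors 𝔫, 𝔭) := (map_prod _ _ _).symm
    _ ≤ absNorm 𝔫 := Nat.le_of_dvd h_pos (map_dvd absNorm h_dvd)

lemma card_primeFactors_le_log_absNorm_div_log_two {𝔫 : Ideal S} (h𝔫 : 𝔫 ≠ ⊥) :
    ((primeFactors 𝔫).card : ℝ) ≤ Real.log (absNorm 𝔫) / Real.log 2 := by
  rw [le_div_iff₀ (Real.log_pos one_lt_two), ← Real.log_pow]
  exact Real.log_le_log (by positivity) (mod_cast two_pow_card_primeFactors_le_absNorm h𝔫)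

lemma natCast_mem_of_not_coprime_absNorm {𝔭 : Ideal S} [𝔭.IsMaximal] {n : ℕ}
    (h : ¬ (absNorm 𝔭).Coprime n) : (n : S) ∈ 𝔭 := by
  obtain ⟨p, f, -, hp_mem, hp, h_norm⟩ := exists_prime_and_absNorm_eq_pow 𝔭
  have h_dvd : p ∣ n := by
    contrapose! h
    rw [h_norm]
    exact ((Nat.Prime.coprime_iff_not_dvd hp).mpr h).pow_left f
  exact 𝔭.mem_of_dvd (Nat.cast_dvd_cast h_dvd) (mod_cast hp_mem)

lemma finite_setOf_natCast_absNorm_le [CharZero S] (x : ℝ) :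
    {𝔞 : Ideal S | (absNorm 𝔞 : ℝ) ≤ x}.Finite :=
  (finite_setOfPred_absNorm_le ⌊x⌋₊).subset fun _ h => Nat.le_floor h

end AbsNorm

section PrimeIdealPowers

open UniqueFactorizationMonoid (primeFactors)

variable {K : Type*} [Field K] [NumberField K]

namespace IsPrimeIdealPower

variable {𝔞 : Ideal (𝓞 K)}

lemma exists_eq_radical_pow (h : IsPrimeIdealPower 𝔞) : ∃ m, 1 ≤ m ∧ 𝔞 = 𝔞.radical ^ m := by
  obtain ⟨𝔭, m, h_prime, -, hm, rfl⟩ := h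
  rw [radical_pow 𝔭 (by omega), h_prime.radical]
  exact ⟨m, hm, rfl⟩

lemma isPrime_radical (h : IsPrimeIdealPower 𝔞) : 𝔞.radical.IsPrime := by
  obtain ⟨𝔭, m, h_prime, -, hm, rfl⟩ := h
  rwa [radical_pow 𝔭 (by omega), h_prime.radical]

lemma radical_ne_bot (h : IsPrimeIdealPower 𝔞) : 𝔞.radical ≠ ⊥ := by
  obtain ⟨𝔭, m, h_prime, h_bot, hm, rfl⟩ := h
  rwa [radical_pow 𝔭 (by omega), h_prime.radical]

lemma natCast_mem_radical_of_not_coprime (h : IsPrimeIdealPower 𝔞) {n : ℕ}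
    (hn : ¬ (absNorm 𝔞).Coprime n) : (n : 𝓞 K) ∈ 𝔞.radical := by
  obtain ⟨m, -, h_eq⟩ := h.exists_eq_radical_pow
  have : 𝔞.radical.IsMaximal := h.isPrime_radical.isMaximal h.radical_ne_bot
  refine natCast_mem_of_not_coprime_absNorm fun h_coprime => hn ?_
  rw [h_eq, map_pow]
  exact h_coprime.pow_left m

end IsPrimeIdealPower

lemma LambdaK_nonneg (𝔞 : Ideal (𝓞 K)) : 0 ≤ LambdaK K 𝔞 := by
  unfold LambdaK
  split_ifs
  exacts [Real.log_natCast_nonneg _, le_rfl]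

variable (K) in
/-- The prime ideal powers of norm at most `x`, the finite index set to which the sum defining
`ψ_K(x, χ∘N)` reduces. -/
noncomputable def primeIdealPowersLE (x : ℝ) : Finset (Ideal (𝓞 K)) :=
  {𝔞 ∈ (finite_setOf_natCast_absNorm_le x).toFinset | IsPrimeIdealPower 𝔞}

variable {x : ℝ}

lemma mem_primeIdealPowersLE {𝔞 : Ideal (𝓞 K)} :
    𝔞 ∈ primeIdealPowersLE K x ↔ (absNorm 𝔞 : ℝ) ≤ x ∧ IsPrimeIdealPower 𝔞 := by
  simp [primeIdealPowersLE]

lemma card_primeIdealPowersLE_of_radical_eq_le (x : ℝ) (𝔭 : Ideal (𝓞 K)) :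
    {𝔞 ∈ primeIdealPowersLE K x | 𝔞.radical = 𝔭}.card ≤ Nat.log (absNorm 𝔭) ⌊x⌋₊ := by
  have h_subset : {𝔞 ∈ primeIdealPowersLE K x | 𝔞.radical = 𝔭} ⊆
      (Finset.Icc 1 (Nat.log (absNorm 𝔭) ⌊x⌋₊)).image (𝔭 ^ ·) := by
    intro 𝔞 h𝔞
    obtain ⟨h_mem, rfl⟩ := Finset.mem_filter.mp h𝔞
    obtain ⟨h_norm, h_pow⟩ := mem_primeIdealPowersLE.mp h_mem
    obtain ⟨m, hm, h_eq⟩ := h_pow.exists_eq_radical_pow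
    have h_two_le : 2 ≤ absNorm 𝔞.radical :=
      two_le_absNorm h_pow.radical_ne_bot h_pow.isPrime_radical.ne_top
    refine Finset.mem_image.mpr ⟨m, Finset.mem_Icc.mpr ⟨hm, ?_⟩, h_eq.symm⟩
    refine Nat.le_log_of_pow_le h_two_le (Nat.le_floor ?_)
    rwa [← map_pow, ← h_eq]
  simpa using (Finset.card_le_card h_subset).trans Finset.card_image_le

lemma sum_LambdaK_of_radical_eq_le_log (hx : 1 ≤ x) {𝔭 : Ideal (𝓞 K)} (h𝔭 : 𝔭 ≠ ⊥) :
    ∑ 𝔞 ∈ primeIdealPowersLE K x with 𝔞.radical = 𝔭, LambdaK K 𝔞 ≤ Real.log x := by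
  have h_norm : 0 < absNorm 𝔭 := Nat.pos_of_ne_zero (absNorm_eq_zero_iff.not.mpr h𝔭)
  have h_pow_le : absNorm 𝔭 ^ Nat.log (absNorm 𝔭) ⌊x⌋₊ ≤ ⌊x⌋₊ :=
    Nat.pow_log_le_self _ (Nat.floor_pos.mpr hx).ne'
  calc ∑ 𝔞 ∈ primeIdealPowersLE K x with 𝔞.radical = 𝔭, LambdaK K 𝔞
      = ∑ 𝔞 ∈ primeIdealPowersLE K x with 𝔞.radical = 𝔭, Real.log (absNorm 𝔭) := by
        refine Finset.sum_congr rfl fun 𝔞 h𝔞 => ?_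
        obtain ⟨h_mem, rfl⟩ := Finset.mem_filter.mp h𝔞
        exact if_pos (mem_primeIdealPowersLE.mp h_mem).2
    _ = {𝔞 ∈ primeIdealPowersLE K x | 𝔞.radical = 𝔭}.card * Real.log (absNorm 𝔭) := by
        rw [Finset.sum_const, nsmul_eq_mul]
    _ ≤ Nat.log (absNorm 𝔭) ⌊x⌋₊ * Real.log (absNorm 𝔭) := by
        gcongr
        exact card_primeIdealPowersLE_of_radical_eq_le x 𝔭
    _ = Real.log ((absNorm 𝔭 : ℝ) ^ Nat.log (absNorm 𝔭) ⌊x⌋₊) := (Real.log_pow _ _).symm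
    _ ≤ Real.log x :=
        Real.log_le_log (by positivity) <|
          (mod_cast h_pow_le : _ ≤ (⌊x⌋₊ : ℝ)).trans (Nat.floor_le (by positivity))

lemma sum_LambdaK_of_le_radical_le (hx : 1 ≤ x) {𝔫 : Ideal (𝓞 K)} (h𝔫 : 𝔫 ≠ ⊥) :
    ∑ 𝔞 ∈ primeIdealPowersLE K x with 𝔫 ≤ 𝔞.radical, LambdaK K 𝔞 ≤
      Real.log (absNorm 𝔫) / Real.log 2 * Real.log x := by
  have h_maps : ∀ 𝔞 ∈ {𝔞 ∈ primeIdealPowersLE K x | 𝔫 ≤ 𝔞.radical},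
      𝔞.radical ∈ primeFactors 𝔫 := by
    intro 𝔞 h𝔞
    obtain ⟨h_mem, h_le⟩ := Finset.mem_filter.mp h𝔞
    have h_pow := (mem_primeIdealPowersLE.mp h_mem).2
    exact (mem_primeFactors_iff_isPrime_and_le h𝔫).mpr ⟨h_pow.isPrime_radical, h_le⟩
  calc ∑ 𝔞 ∈ primeIdealPowersLE K x with 𝔫 ≤ 𝔞.radical, LambdaK K 𝔞
      = ∑ 𝔭 ∈ primeFactors 𝔫,
          ∑ 𝔞 ∈ primeIdealPowersLE K x with 𝔫 ≤ 𝔞.radical ∧ 𝔞.radical = 𝔭, LambdaK K 𝔞 := by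
        simp only [← Finset.sum_fiberwise_of_maps_to h_maps, Finset.filter_filter]
    _ ≤ ∑ _𝔭 ∈ primeFactors 𝔫, Real.log x := by
        refine Finset.sum_le_sum fun 𝔭 h𝔭 => ?_
        obtain ⟨-, h_le⟩ := (mem_primeFactors_iff_isPrime_and_le h𝔫).mp h𝔭
        refine le_trans ?_ (sum_LambdaK_of_radical_eq_le_log hx (ne_bot_of_le_ne_bot h𝔫 h_le))
        exact Finset.sum_le_sum_of_subset_of_nonneg
          (Finset.monotone_filter_right _ fun _ _ h => h.2) fun 𝔞 _ _ => LambdaK_nonneg 𝔞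
    _ = (primeFactors 𝔫).card * Real.log x := by
        rw [Finset.sum_const, nsmul_eq_mul]
    _ ≤ Real.log (absNorm 𝔫) / Real.log 2 * Real.log x :=
        mul_le_mul_of_nonneg_right (card_primeFactors_le_log_absNorm_div_log_two h𝔫)
          (Real.log_nonneg hx)

lemma sum_LambdaK_of_not_coprime_le (hx : 1 ≤ x) {q : ℕ} (hq : q ≠ 0) :
    ∑ 𝔞 ∈ primeIdealPowersLE K x with ¬ (absNorm 𝔞).Coprime q, LambdaK K 𝔞 ≤
      Module.finrank ℚ K / Real.log 2 * (Real.log q * Real.log x) := by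
  have h_span : span {(q : 𝓞 K)} ≠ ⊥ := by simpa using hq
  calc ∑ 𝔞 ∈ primeIdealPowersLE K x with ¬ (absNorm 𝔞).Coprime q, LambdaK K 𝔞
      ≤ ∑ 𝔞 ∈ primeIdealPowersLE K x with span {(q : 𝓞 K)} ≤ 𝔞.radical, LambdaK K 𝔞 := by
        refine Finset.sum_le_sum_of_subset_of_nonneg
          (Finset.monotone_filter_right _ fun 𝔞 h𝔞 h => ?_) fun 𝔞 _ _ => LambdaK_nonneg 𝔞
        have h_pow := (mem_primeIdealPowersLE.mp h𝔞).2
        exact (span_singleton_le_iff_mem _).mpr (h_pow.natCast_mem_radical_of_not_coprime h)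
    _ ≤ Real.log (absNorm (span {(q : 𝓞 K)})) / Real.log 2 * Real.log x :=
        sum_LambdaK_of_le_radical_le hx h_span
    _ = Module.finrank ℚ K / Real.log 2 * (Real.log q * Real.log x) := by
        rw [absNorm_span_natCast, RingOfIntegers.rank, Nat.cast_pow, Real.log_pow]
        ring

end PrimeIdealPowers

section Characters

variable {K : Type*} [Field K] [NumberField K] {x : ℝ} {q r : ℕ}

lemma psiKChi_eq_sum (χ : DirichletCharacter ℂ q) :
    psiKChi K x χ = ∑ 𝔞 ∈ primeIdealPowersLE K x, χ (absNorm 𝔞 : ZMod q) * (LambdaK K 𝔞 : ℂ) := by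
  rw [psiKChi, tsum_eq_sum (s := primeIdealPowersLE K x)]
  · exact Finset.sum_congr rfl fun 𝔞 h𝔞 => if_pos (mem_primeIdealPowersLE.mp h𝔞).1
  · intro 𝔞 h𝔞
    rw [mem_primeIdealPowersLE, not_and] at h𝔞
    split_ifs with h_norm
    · simp [LambdaK, h𝔞 h_norm]
    · rfl

lemma psiKChi_sub_psiKChi_changeLevel (hdvd : r ∣ q) (χ : DirichletCharacter ℂ r) :
    psiKChi K x χ - psiKChi K x (DirichletCharacter.changeLevel hdvd χ) =
      ∑ 𝔞 ∈ primeIdealPowersLE K x with ¬ (absNorm 𝔞).Coprime q,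
        χ (absNorm 𝔞 : ZMod r) * (LambdaK K 𝔞 : ℂ) := by
  rw [psiKChi_eq_sum, psiKChi_eq_sum, ← Finset.sum_sub_distrib, Finset.sum_filter]
  refine Finset.sum_congr rfl fun 𝔞 _ => ?_
  rw [changeLevel_natCast]
  split_ifs <;> simp

lemma norm_psiKChi_sub_psiKChi_changeLevel_le (hdvd : r ∣ q) (χ : DirichletCharacter ℂ r) :
    ‖psiKChi K x χ - psiKChi K x (DirichletCharacter.changeLevel hdvd χ)‖ ≤
      ∑ 𝔞 ∈ primeIdealPowersLE K x with ¬ (absNorm 𝔞).Coprime q, LambdaK K 𝔞 := by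
  rw [psiKChi_sub_psiKChi_changeLevel]
  refine norm_sum_le_of_le _ fun 𝔞 _ => ?_
  rw [norm_mul, Complex.norm_of_nonneg (LambdaK_nonneg 𝔞)]
  exact mul_le_of_le_one_left (LambdaK_nonneg 𝔞) (χ.norm_le_one _)

end Characters

theorem char_exchange_general (K : Type*) [Field K] [NumberField K] {q r : ℕ} (hq : q ≠ 0)
    (hdvd : r ∣ q) (χ : DirichletCharacter ℂ r) {x : ℝ} (hx : 1 ≤ x) :
    ‖psiKChi K x χ - psiKChi K x (DirichletCharacter.changeLevel hdvd χ)‖ ≤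
      Module.finrank ℚ K / Real.log 2 * (Real.log q * Real.log x) :=
  (norm_psiKChi_sub_psiKChi_changeLevel_le hdvd χ).trans (sum_LambdaK_of_not_coprime_le hx hq)

/-- **Character exchange (Lemma 2).**
If the Dirichlet character `χ` modulo `q` is induced by the primitive character `χ*`
modulo `q*`, then for all `x ≥ 2`,
`|ψ_K(x, χ*∘N) − ψ_K(x, χ∘N)| ≪ (log qx)²`, the implied constant depending only on `K`. -/
theorem char_exchange (K : Type*) [Field K] [NumberField K] [IsGalois ℚ K] :
    ∃ C : ℝ, 0 < C ∧ ∀ (q qstar : ℕ), 1 ≤ q → ∀ (hdvd : qstar ∣ q)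
      (χstar : DirichletCharacter ℂ qstar), χstar.IsPrimitive →
      ∀ x : ℝ, 2 ≤ x →
        ‖psiKChi K x χstar - psiKChi K x (DirichletCharacter.changeLevel hdvd χstar)‖ ≤
          C * Real.log (q * x) ^ 2 := by
  have hC : 0 < Module.finrank ℚ K / Real.log 2 :=
    div_pos (mod_cast Module.finrank_pos) (Real.log_pos one_lt_two)
  refine ⟨_, hC, fun q r hq hdvd χ _ x hx => ?_⟩
  calc ‖psiKChi K x χ - psiKChi K x (DirichletCharacter.changeLevel hdvd χ)‖
      ≤ Module.finrank ℚ K / Real.log 2 * (Real.log q * Real.log x) :=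
        char_exchange_general K (by omega) hdvd χ (by linarith)
    _ ≤ Module.finrank ℚ K / Real.log 2 * Real.log (q * x) ^ 2 := by
        gcongr
        exact log_mul_log_le_log_mul_sq (mod_cast hq) (by linarith)
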